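/- If Δ ⊢ U : s for a sort s, γ is a well-typed substitution from Δ to Γ (i.e., Γ ⊢ xγ : Tγ for all (x:T) ∈ Δ), and Uγσ ∈ 𝒟, then ⟦Uγ⟧σ = ⟦U⟧_{γσ} (the interpretation commutes with well-typed substitution). -/

import Mathlib

set_option maxHeartbeats 1000000

/-! # Terms of λΠ/R (de Bruijn representation) -/

inductive Trm (F : Type) : Type
  | type : Trm F
  | kind : Trm F
  | var : ℕ → Trm F
  | sym : F → Trm F
  | pi : Trm F → Trm F → Trm F
  | app : Trm F → Trm F → Trm F
  | lam : Trm F → Trm F → Trm F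

namespace Trm

variable {F : Type}

/-- Lifting of a renaming under a binder. -/
def upRen (ρ : ℕ → ℕ) : ℕ → ℕ
  | 0 => 0
  | n + 1 => ρ n + 1

/-- Renaming of (de Bruijn) variables. -/
def rename (ρ : ℕ → ℕ) : Trm F → Trm F
  | .type => .type
  | .kind => .kind
  | .var n => .var (ρ n)
  | .sym f => .sym f
  | .pi A B => .pi (rename ρ A) (rename (upRen ρ) B)
  | .app t u => .app (rename ρ t) (rename ρ u)
  | .lam A b => .lam (rename ρ A) (rename (upRen ρ) b)

/-- Lifting of a substitution under a binder. -/
def up (σ : ℕ → Trm F) : ℕ → Trm F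
  | 0 => .var 0
  | n + 1 => rename Nat.succ (σ n)

/-- Capture-avoiding (parallel) substitution. -/
def subst (σ : ℕ → Trm F) : Trm F → Trm F
  | .type => .type
  | .kind => .kind
  | .var n => σ n
  | .sym f => .sym f
  | .pi A B => .pi (subst σ A) (subst (up σ) B)
  | .app t u => .app (subst σ t) (subst σ u)
  | .lam A b => .lam (subst σ A) (subst (up σ) b)

/-- Cons of a term on a substitution: `scons a σ` maps `0` to `a` and `n+1` to `σ n`. -/
def scons (a : Trm F) (σ : ℕ → Trm F) : ℕ → Trm F
  | 0 => a
  | n + 1 => σ n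

/-- Substitution of the first free variable: `t[x ↦ a]`. -/
def subst1 (a t : Trm F) : Trm F := subst (scons a .var) t

/-- Shifting of all free variables. -/
def shift : Trm F → Trm F := rename Nat.succ

/-- Application of a head term to a list of arguments: `appList h [t1,…,tn] = h t1 … tn`. -/
def appList (h : Trm F) : List (Trm F) → Trm F
  | [] => h
  | a :: as => appList (.app h a) as

/-- Free (de Bruijn) variables of a term. -/
def FV : Trm F → Set ℕ
  | .type => ∅
  | .kind => ∅
  | .var n => {n}
  | .sym _ => ∅
  | .pi A B => FV A ∪ {n | n + 1 ∈ FV B}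
  | .app t u => FV t ∪ FV u
  | .lam A b => FV A ∪ {n | n + 1 ∈ FV b}

/-- The class 𝕂 of kinds: `K = TYPE | Πx:t.K`. -/
def IsKind : Trm F → Prop
  | .type => True
  | .pi _ B => IsKind B
  | _ => False

/-- Sorts: `TYPE` and `KIND`. -/
def IsSort (s : Trm F) : Prop := s = .type ∨ s = .kind

/-- The product arity of a term: the number of leading products. -/
def piArity : Trm F → ℕ
  | .pi _ B => piArity B + 1
  | _ => 0

/-- Strip `n` leading products. -/
def piCodN : ℕ → Trm F → Trm F
  | 0, T => T
  | n + 1, .pi _ B => piCodN n B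
  | _ + 1, T => T

/-- The first `n` domains of the leading products, as a de Bruijn context
(type of variable `0` first, i.e. innermost first). -/
def teleN : ℕ → Trm F → List (Trm F)
  | 0, _ => []
  | n + 1, .pi A B => teleN n B ++ [A]
  | _ + 1, _ => []

/-- The full telescope of leading products, as a de Bruijn context. -/
def telescope (T : Trm F) : List (Trm F) := teleN (piArity T) T

/-- The domains of the leading products, outermost first. -/
def piDoms : Trm F → List (Trm F)
  | .pi A B => A :: piDoms B
  | _ => []

end Trm

/-- The subterm relation (reflexive and transitive). -/
inductive Subterm {F : Type} : Trm F → Trm F → Prop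
  | refl (t : Trm F) : Subterm t t
  | piL {t A B} : Subterm t A → Subterm t (.pi A B)
  | piR {t A B} : Subterm t B → Subterm t (.pi A B)
  | appL {t u v} : Subterm t u → Subterm t (.app u v)
  | appR {t u v} : Subterm t v → Subterm t (.app u v)
  | lamL {t A b} : Subterm t A → Subterm t (.lam A b)
  | lamR {t A b} : Subterm t b → Subterm t (.lam A b)

/-! # Rewriting -/

/-- A set of rewriting rules `l → r`. -/
abbrev Rules (F : Type) := Set (Trm F × Trm F)

/-- `R` is a rewriting system: for every rule `l → r`, `FV(r) ⊆ FV(l)` and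
`l` is of the form `f l⃗`. -/
def IsRewriteSystem {F : Type} (R : Rules F) : Prop :=
  ∀ p ∈ R, Trm.FV p.2 ⊆ Trm.FV p.1 ∧ ∃ (f : F) (ls : List (Trm F)), p.1 = Trm.appList (.sym f) ls

/-- A symbol is defined if it heads the left-hand side of some rule. -/
def Defined {F : Type} (R : Rules F) (f : F) : Prop :=
  ∃ (ls : List (Trm F)) (r : Trm F), (Trm.appList (.sym f) ls, r) ∈ R

/-- One-step reduction `→ = →β ∪ →R`: β-reduction together with the closure of the
rules of `R` by substitution and context. -/
inductive Red {F : Type} (R : Rules F) : Trm F → Trm F → Prop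
  | beta (A b a : Trm F) : Red R (.app (.lam A b) a) (Trm.subst1 a b)
  | rule {l r : Trm F} (σ : ℕ → Trm F) : (l, r) ∈ R → Red R (Trm.subst σ l) (Trm.subst σ r)
  | appL {t t' u} : Red R t t' → Red R (.app t u) (.app t' u)
  | appR {t u u'} : Red R u u' → Red R (.app t u) (.app t u')
  | piL {A A' B} : Red R A A' → Red R (.pi A B) (.pi A' B)
  | piR {A B B'} : Red R B B' → Red R (.pi A B) (.pi A B')
  | lamL {A A' b} : Red R A A' → Red R (.lam A b) (.lam A' b)
  | lamR {A b b'} : Red R b b' → Red R (.lam A b) (.lam A b')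

/-- Multi-step reduction `→*`. -/
def RedStar {F : Type} (R : Rules F) : Trm F → Trm F → Prop := Relation.ReflTransGen (Red R)

/-- Joinability `↓`. -/
def Joinable {F : Type} (R : Rules F) (t u : Trm F) : Prop :=
  ∃ v, RedStar R t v ∧ RedStar R u v

/-- Local confluence: `← · → ⊆ →* · *←`. -/
def LocallyConfluent {F : Type} (R : Rules F) : Prop :=
  ∀ t u v, Red R t u → Red R t v → Joinable R u v

/-- `t` is strongly normalizing (terminating): no infinite reduction sequence from `t`. -/
def SN {F : Type} (R : Rules F) (t : Trm F) : Prop := Acc (fun a b => Red R b a) t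

/-- The set of strongly normalizing terms. -/
def SNset {F : Type} (R : Rules F) : Set (Trm F) := {t | SN R t}

/-- `t` is in normal form. -/
def NormalForm {F : Type} (R : Rules F) (t : Trm F) : Prop := ∀ u, ¬ Red R t u

/-- Neutral terms: `(λx:A.t)u v⃗`, `x v⃗`, or `f v⃗` where every rule `f l⃗ → r ∈ R`
satisfies `|l⃗| ≤ |v⃗|`. -/
def Neutral {F : Type} (R : Rules F) (t : Trm F) : Prop :=
  (∃ (A b a : Trm F) (vs : List (Trm F)), t = Trm.appList (.app (.lam A b) a) vs) ∨
  (∃ (x : ℕ) (vs : List (Trm F)), t = Trm.appList (.var x) vs) ∨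
  (∃ (f : F) (vs : List (Trm F)), t = Trm.appList (.sym f) vs ∧
    ∀ (ls : List (Trm F)) (r : Trm F), (Trm.appList (.sym f) ls, r) ∈ R → ls.length ≤ vs.length)

/-- Computability predicates: `S ⊆ SN`, `S` is closed under reduction, and `S` contains
every neutral term all of whose one-step reducts are in `S`. -/
def IsCompPred {F : Type} (R : Rules F) (S : Set (Trm F)) : Prop :=
  S ⊆ SNset R ∧ (∀ t ∈ S, ∀ u, Red R t u → u ∈ S) ∧
  (∀ t, Neutral R t → (∀ u, Red R t u → u ∈ S) → t ∈ S)

/-! # Typing: λP extended with function symbols and conversion modulo `→` -/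

/-- The typing rules of λΠ/R: the rules of λP (in de Bruijn presentation) with the extra
rule (fun) `⊢ f : Θ_f` and conversion up to joinability for `→`. -/
inductive Typing {F : Type} (R : Rules F) (Θ sΘ : F → Trm F) :
    List (Trm F) → Trm F → Trm F → Prop
  | ax : Typing R Θ sΘ [] .type .kind
  | var {Γ A s} : Trm.IsSort s → Typing R Θ sΘ Γ A s →
      Typing R Θ sΘ (A :: Γ) (.var 0) (Trm.shift A)
  | weak {Γ A s b B} : Trm.IsSort s → Typing R Θ sΘ Γ A s → Typing R Θ sΘ Γ b B →
      Typing R Θ sΘ (A :: Γ) (Trm.shift b) (Trm.shift B)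
  | prod {Γ A B s} : Trm.IsSort s → Typing R Θ sΘ Γ A .type → Typing R Θ sΘ (A :: Γ) B s →
      Typing R Θ sΘ Γ (.pi A B) s
  | abs {Γ A b B s} : Trm.IsSort s → Typing R Θ sΘ (A :: Γ) b B →
      Typing R Θ sΘ Γ (.pi A B) s → Typing R Θ sΘ Γ (.lam A b) (.pi A B)
  | app {Γ t a A B} : Typing R Θ sΘ Γ t (.pi A B) → Typing R Θ sΘ Γ a A →
      Typing R Θ sΘ Γ (.app t a) (Trm.subst1 a B)
  | conv {Γ a A B s} : Typing R Θ sΘ Γ a A → Joinable R A B → Typing R Θ sΘ Γ B s →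
      Trm.IsSort s → Typing R Θ sΘ Γ a B
  | symb (f : F) : Trm.IsSort (sΘ f) → Typing R Θ sΘ [] (Θ f) (sΘ f) →
      Typing R Θ sΘ [] (.sym f) (Θ f)

/-- `→` preserves typing (subject reduction). -/
def PresTyping {F : Type} (R : Rules F) (Θ sΘ : F → Trm F) : Prop :=
  ∀ Γ t u T, Typing R Θ sΘ Γ t T → Red R t u → Typing R Θ sΘ Γ u T

/-- A substitution `γ` is well-typed from `Δ` to `Γ` (for a generic typing judgment `Ty`):
for all `(x : T) ∈ Δ`, `Ty Γ (xγ) (Tγ)`. -/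
def SubstTyped {F : Type} (Ty : List (Trm F) → Trm F → Trm F → Prop)
    (Γ : List (Trm F)) (γ : ℕ → Trm F) (Δ : List (Trm F)) : Prop :=
  ∀ i A, Δ[i]? = some A → Ty Γ (γ i) (Trm.subst (fun j => γ (j + i + 1)) A)

/-! # Interpretation of types as computability predicates -/

/-- `𝕀`: partial functions from terms to sets of terms. -/
abbrev Interp (F : Type) := Trm F → Part (Set (Trm F))

/-- Graph inclusion of partial functions. -/
def InterpLE {F : Type} (I J : Interp F) : Prop := ∀ T S, S ∈ I T → S ∈ J T

/-- `I` is the least fixpoint of `φ` on `𝕀` (ordered by graph inclusion). -/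
def IsLfpInterp {F : Type} (φ : Interp F → Interp F) (I : Interp F) : Prop :=
  φ I = I ∧ ∀ J, φ J = J → InterpLE I J

/-- The domain `D(I)`: terminating terms `T` such that whenever `T →* Πx:A.B`,
`A ∈ dom(I)` and `B[x↦a] ∈ dom(I)` for all `a ∈ I(A)`. -/
def domD {F : Type} (R : Rules F) (I : Interp F) : Set (Trm F) :=
  {T | SN R T ∧ ∀ A B, RedStar R T (.pi A B) →
    (I A).Dom ∧ ∀ S ∈ I A, ∀ a ∈ S, (I (Trm.subst1 a B)).Dom}

/-- `{t | ∀ a ∈ I(A), t a ∈ I(B[x↦a])}` (relational reading of the partial function `I`). -/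
def piPart {F : Type} (I : Interp F) (A B : Trm F) : Set (Trm F) :=
  {t | ∀ S ∈ I A, ∀ a ∈ S, ∀ S' ∈ I (Trm.subst1 a B), Trm.app t a ∈ S'}

open Classical in
/-- The monotone function `F : 𝕀 → 𝕀`: `dom(F(I)) = D(I)`; `F(I)(T) = SN` if the normal
form of `T` is not a product; `F(I)(T) = {t | ∀ a ∈ I(A), t a ∈ I(B[x↦a])}` if the normal
form of `T` is `Πx:A.B`. -/
noncomputable def interpF {F : Type} (R : Rules F) (I : Interp F) : Interp F := fun T =>
  ⟨T ∈ domD R I, fun _ =>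
    if h : ∃ A B, RedStar R T (.pi A B) ∧ NormalForm R (.pi A B) then
      piPart I h.choose h.choose_spec.choose
    else SNset R⟩

/-- The value of a partial interpretation at `T` (as a set). -/
def partMem {F : Type} (I : Interp F) (T : Trm F) : Set (Trm F) := {t | ∀ S ∈ I T, t ∈ S}

open Classical in
/-- The interpretation `⟦T⟧σ` of a term `T` wrt a substitution `σ`, relative to the least
fixpoint `I = ℐ` of `interpF`: `⟦s⟧σ = 𝒟` for `s` a sort;
`⟦Πx:A.K⟧σ = {t | ∀ a ∈ ⟦A⟧σ, t a ∈ ⟦K⟧[x↦a,σ]}` for `K` a kind;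
`⟦T⟧σ = ℐ(Tσ)` if `T` is neither a kind nor `KIND` and `Tσ ∈ 𝒟`; `⟦T⟧σ = SN` otherwise. -/
noncomputable def interp {F : Type} (R : Rules F) (I : Interp F) :
    Trm F → (ℕ → Trm F) → Set (Trm F)
  | .type, _ => domD R I
  | .kind, _ => domD R I
  | .pi A B, σ =>
      if Trm.IsKind B then
        {t | ∀ a ∈ interp R I A σ, Trm.app t a ∈ interp R I B (Trm.scons a σ)}
      else if Trm.subst σ (.pi A B) ∈ domD R I then partMem I (Trm.subst σ (.pi A B))
      else SNset R
  | .var n, σ =>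
      if Trm.subst σ (.var n) ∈ domD R I then partMem I (Trm.subst σ (.var n)) else SNset R
  | .sym g, σ =>
      if Trm.subst σ (.sym g) ∈ domD R I then partMem I (Trm.subst σ (.sym g)) else SNset R
  | .app t u, σ =>
      if Trm.subst σ (.app t u) ∈ domD R I then partMem I (Trm.subst σ (.app t u)) else SNset R
  | .lam A b, σ =>
      if Trm.subst σ (.lam A b) ∈ domD R I then partMem I (Trm.subst σ (.lam A b)) else SNset R

/-- `σ ⊨ Γ`: a substitution is adequate wrt an environment. -/
def Models {F : Type} (R : Rules F) (I : Interp F) (σ : ℕ → Trm F) (Γ : List (Trm F)) : Prop :=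
  ∀ i A, Γ[i]? = some A → σ i ∈ interp R I A (fun j => σ (j + i + 1))

/-- The typing map `Θ` is adequate: `f ∈ ⟦Θ_f⟧` whenever `⊢ Θ_f : s_f` and `Θ_f ∈ ⟦s_f⟧`. -/
def Adequate {F : Type} (R : Rules F) (Θ sΘ : F → Trm F) (I : Interp F) : Prop :=
  ∀ f : F, Typing R Θ sΘ [] (Θ f) (sΘ f) → Θ f ∈ interp R I (sΘ f) Trm.var →
    Trm.sym f ∈ interp R I (Θ f) Trm.var

/-- The substitution `[x⃗ ↦ l⃗]` (where `ls` lists the images of variables `0, 1, …`). -/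
def mkSubst {F : Type} (ls : List (Trm F)) : ℕ → Trm F := fun i =>
  (ls[i]?).getD (.var (i - ls.length))

/-- Composition of substitutions: `x ↦ (xγ)σ`. -/
def compSubst {F : Type} (γ σ : ℕ → Trm F) : ℕ → Trm F := fun i => Trm.subst σ (γ i)

/-- The set `ℂ` of terms `f t⃗` with `|t⃗| = arit(Θ_f)`, `⊢ Θ_f : s_f`, `Θ_f ∈ ⟦s_f⟧` and
`[x⃗↦t⃗] ⊨ Γ_f`. -/
def CC {F : Type} (R : Rules F) (Θ sΘ : F → Trm F) (I : Interp F) : Set (Trm F) :=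
  {t | ∃ (f : F) (ts : List (Trm F)), t = Trm.appList (.sym f) ts ∧
    ts.length = Trm.piArity (Θ f) ∧
    Typing R Θ sΘ [] (Θ f) (sΘ f) ∧ Θ f ∈ interp R I (sΘ f) Trm.var ∧
    Models R I (mkSubst ts.reverse) (Trm.telescope (Θ f))}

/-! # Dependency pairs -/

/-- Occurrences of `p` in a term, not at the root, such that `p` is not further applied
(i.e. `p` collects all the arguments of its head at this occurrence). -/
inductive MaxOccNR {F : Type} (p : Trm F) : Trm F → Prop
  | appL {u v} : MaxOccNR p u → MaxOccNR p (.app u v)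
  | appR {u v} : MaxOccNR p v → MaxOccNR p (.app u v)
  | appRroot {u} : MaxOccNR p (.app u p)
  | piL {A B} : MaxOccNR p A → MaxOccNR p (.pi A B)
  | piLroot {B} : MaxOccNR p (.pi p B)
  | piR {A B} : MaxOccNR p B → MaxOccNR p (.pi A B)
  | piRroot {A} : MaxOccNR p (.pi A p)
  | lamL {A b} : MaxOccNR p A → MaxOccNR p (.lam A b)
  | lamLroot {b} : MaxOccNR p (.lam p b)
  | lamR {A b} : MaxOccNR p b → MaxOccNR p (.lam A b)
  | lamRroot {A} : MaxOccNR p (.lam A p)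

/-- `p` occurs in `t` as a maximal application. -/
def MaxOcc {F : Type} (p t : Trm F) : Prop := t = p ∨ MaxOccNR p t

/-- Dependency pairs: `f l⃗ > g m⃗` iff there is a rule `f l⃗ → r ∈ R`, `g` is defined and
`g m⃗` is a subterm of `r` such that `m⃗` are all the arguments to which `g` is applied. -/
def DepPair {F : Type} (R : Rules F) (f : F) (ls : List (Trm F)) (g : F)
    (ms : List (Trm F)) : Prop :=
  Defined R g ∧ ∃ r, (Trm.appList (.sym f) ls, r) ∈ R ∧ MaxOcc (Trm.appList (.sym g) ms) r

/-- `f t⃗ →arg f u⃗`: reduction of exactly one argument. -/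
def ArgRed {F : Type} (R : Rules F) (t u : Trm F) : Prop :=
  ∃ (f : F) (pre post : List (Trm F)) (a b : Trm F), Red R a b ∧
    t = Trm.appList (.sym f) (pre ++ a :: post) ∧ u = Trm.appList (.sym f) (pre ++ b :: post)

/-- `>ₛ`: the closure of the dependency pair relation by substitution and left-application:
`f t₁…t_p >ₛ g u₁…u_q` iff there are a dependency pair `f l₁…l_i > g m₁…m_j` with `i ≤ p`
and `j ≤ q` and a substitution `σ` such that `t_k →* l_kσ` for `k ≤ i` and `m_kσ = u_k`
for `k ≤ j`. -/
def GTsub {F : Type} (R : Rules F) (t u : Trm F) : Prop :=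
  ∃ (f g : F) (ts us ls ms : List (Trm F)) (σ : ℕ → Trm F),
    t = Trm.appList (.sym f) ts ∧ u = Trm.appList (.sym g) us ∧
    DepPair R f ls g ms ∧ ls.length ≤ ts.length ∧ ms.length ≤ us.length ∧
    (∀ (k : ℕ) (tk lk : Trm F), ts[k]? = some tk → ls[k]? = some lk → RedStar R tk (Trm.subst σ lk)) ∧
    (∀ (k : ℕ) (mk : Trm F), ms[k]? = some mk → us[k]? = some (Trm.subst σ mk))

/-- The call relation `≻̃ = →arg* · >ₛ` on `ℂ`. -/
def CallRel {F : Type} (R : Rules F) (Θ sΘ : F → Trm F) (I : Interp F) (t u : Trm F) : Prop :=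
  t ∈ CC R Θ sΘ I ∧ u ∈ CC R Θ sΘ I ∧
    ∃ v, Relation.ReflTransGen (ArgRed R) t v ∧ GTsub R v u

/-! # Precedence and well-structured systems -/

/-- `f ⪰ g` (one step): `g` occurs in `Θ_f` or in the right-hand side of a rule of `f`. -/
def PrecBase {F : Type} (R : Rules F) (Θ : F → Trm F) (f g : F) : Prop :=
  Subterm (.sym g) (Θ f) ∨
  ∃ (ls : List (Trm F)) (r : Trm F), (Trm.appList (.sym f) ls, r) ∈ R ∧ Subterm (.sym g) r

/-- `⪰`: the smallest quasi-order containing `PrecBase`. -/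
def Preceq {F : Type} (R : Rules F) (Θ : F → Trm F) : F → F → Prop :=
  Relation.ReflTransGen (PrecBase R Θ)

/-- `≻`: the strict part of `⪰`. -/
def Prec {F : Type} (R : Rules F) (Θ : F → Trm F) (f g : F) : Prop :=
  Preceq R Θ f g ∧ ¬ Preceq R Θ g f

/-- The restricted type system `⊢_{≺ f}`: as `Typing`, but function symbols may only be
introduced when strictly smaller than `f` in the precedence. -/
inductive LTyp {F : Type} (R : Rules F) (Θ sΘ : F → Trm F) (f : F) :
    List (Trm F) → Trm F → Trm F → Prop
  | ax : LTyp R Θ sΘ f [] .type .kind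
  | var {Γ A s} : Trm.IsSort s → LTyp R Θ sΘ f Γ A s →
      LTyp R Θ sΘ f (A :: Γ) (.var 0) (Trm.shift A)
  | weak {Γ A s b B} : Trm.IsSort s → LTyp R Θ sΘ f Γ A s → LTyp R Θ sΘ f Γ b B →
      LTyp R Θ sΘ f (A :: Γ) (Trm.shift b) (Trm.shift B)
  | prod {Γ A B s} : Trm.IsSort s → LTyp R Θ sΘ f Γ A .type → LTyp R Θ sΘ f (A :: Γ) B s →
      LTyp R Θ sΘ f Γ (.pi A B) s
  | abs {Γ A b B s} : Trm.IsSort s → LTyp R Θ sΘ f (A :: Γ) b B →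
      LTyp R Θ sΘ f Γ (.pi A B) s → LTyp R Θ sΘ f Γ (.lam A b) (.pi A B)
  | app {Γ t a A B} : LTyp R Θ sΘ f Γ t (.pi A B) → LTyp R Θ sΘ f Γ a A →
      LTyp R Θ sΘ f Γ (.app t a) (Trm.subst1 a B)
  | conv {Γ a A B s} : LTyp R Θ sΘ f Γ a A → Joinable R A B → LTyp R Θ sΘ f Γ B s →
      Trm.IsSort s → LTyp R Θ sΘ f Γ a B
  | symb (g : F) : Prec R Θ f g → Trm.IsSort (sΘ g) → LTyp R Θ sΘ f [] (Θ g) (sΘ g) →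
      LTyp R Θ sΘ f [] (.sym g) (Θ g)

/-- The arguments `y⃗γ = [y₁γ, …, y_jγ]` of an instantiated dependency pair right-hand
side, where `y_j` is de Bruijn variable `0`. -/
def dpArgs {F : Type} (γ : ℕ → Trm F) (j : ℕ) : List (Trm F) :=
  (List.range j).reverse.map γ

/-- The restricted type system `⊢_{f l⃗}` (computability closure): as `Typing`, except that
types are required to be typable using symbols smaller than `f` only, and function symbols
are introduced either as undefined constants or through instances of dependency pairs of
`f l⃗`. -/
inductive RTyp {F : Type} (R : Rules F) (Θ sΘ : F → Trm F) (f : F) (ls : List (Trm F)) :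
    List (Trm F) → Trm F → Trm F → Prop
  | ax : RTyp R Θ sΘ f ls [] .type .kind
  | var {Γ A s} : Trm.IsSort s → LTyp R Θ sΘ f Γ A s →
      RTyp R Θ sΘ f ls (A :: Γ) (.var 0) (Trm.shift A)
  | weak {Γ A s b B} : Trm.IsSort s → LTyp R Θ sΘ f Γ A s → RTyp R Θ sΘ f ls Γ b B →
      RTyp R Θ sΘ f ls (A :: Γ) (Trm.shift b) (Trm.shift B)
  | prod {Γ A B s} : Trm.IsSort s → RTyp R Θ sΘ f ls Γ A .type →
      RTyp R Θ sΘ f ls (A :: Γ) B s → RTyp R Θ sΘ f ls Γ (.pi A B) s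
  | abs {Γ A b B s} : Trm.IsSort s → RTyp R Θ sΘ f ls (A :: Γ) b B →
      LTyp R Θ sΘ f Γ (.pi A B) s → RTyp R Θ sΘ f ls Γ (.lam A b) (.pi A B)
  | app {Γ t a A B s} : Trm.IsSort s → RTyp R Θ sΘ f ls Γ t (.pi A B) →
      RTyp R Θ sΘ f ls Γ a A → LTyp R Θ sΘ f Γ (.pi A B) s →
      RTyp R Θ sΘ f ls Γ (.app t a) (Trm.subst1 a B)
  | conv {Γ a A B s s'} : Trm.IsSort s → Trm.IsSort s' → RTyp R Θ sΘ f ls Γ a A →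
      Joinable R A B → LTyp R Θ sΘ f Γ B s → LTyp R Θ sΘ f Γ A s' →
      RTyp R Θ sΘ f ls Γ a B
  | dp {Γ : List (Trm F)} (g : F) (γ : ℕ → Trm F) (j : ℕ) :
      j ≤ Trm.piArity (Θ g) → Trm.IsSort (sΘ g) → LTyp R Θ sΘ f [] (Θ g) (sΘ g) →
      (∀ i A, (Trm.teleN j (Θ g))[i]? = some A →
        RTyp R Θ sΘ f ls Γ (γ i) (Trm.subst (fun k => γ (k + i + 1)) A)) →
      DepPair R f ls g (dpArgs γ j) →
      RTyp R Θ sΘ f ls Γ (Trm.appList (.sym g) (dpArgs γ j)) (Trm.subst γ (Trm.piCodN j (Θ g)))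
  | const (g : F) : ¬ Defined R g → Trm.IsSort (sΘ g) → LTyp R Θ sΘ f [] (Θ g) (sΘ g) →
      RTyp R Θ sΘ f ls [] (.sym g) (Θ g)

/-- `R` is well-structured (wrt the assignment `Δ` of an environment to every rule):
(a) `≻` is well-founded; (b) `|l⃗| ≤ arit(Θ_f)` for every rule `f l⃗ → r`;
(c) `|m⃗| ≤ arit(Θ_g)` for every dependency pair `f l⃗ > g m⃗`;
(d) `Δ_{f l⃗→r} ⊢_{f l⃗} r : U[x⃗↦l⃗]` for every rule `f l⃗ → r`, where `Θ_f = Πx⃗:T⃗.U`. -/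
def WellStructured {F : Type} (R : Rules F) (Θ sΘ : F → Trm F)
    (Δ : Trm F → Trm F → List (Trm F)) : Prop :=
  WellFounded (fun g f => Prec R Θ f g) ∧
  (∀ l r, (l, r) ∈ R → ∀ (f : F) ls, l = Trm.appList (.sym f) ls →
    ls.length ≤ Trm.piArity (Θ f)) ∧
  (∀ (f : F) ls (g : F) ms, DepPair R f ls g ms → ms.length ≤ Trm.piArity (Θ g)) ∧
  (∀ l r, (l, r) ∈ R → ∀ (f : F) ls, l = Trm.appList (.sym f) ls →
    RTyp R Θ sΘ f ls (Δ l r) r (Trm.subst (mkSubst ls.reverse) (Trm.piCodN ls.length (Θ f))))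

/-- `R` is accessible: for every rule `f l⃗ → r` with `Θ_f = Πx⃗:T⃗.U`, `|x⃗| = |l⃗|`, and
every substitution `σ`, `σ ⊨ Δ_{f l⃗→r}` whenever `⊢ Θ_f : s_f`, `Θ_f ∈ ⟦s_f⟧` and
`[x⃗↦l⃗]σ ⊨ x⃗:T⃗`. -/
def Accessible {F : Type} (R : Rules F) (Θ sΘ : F → Trm F) (I : Interp F)
    (Δ : Trm F → Trm F → List (Trm F)) : Prop :=
  ∀ l r, (l, r) ∈ R → ∀ (f : F) ls, l = Trm.appList (.sym f) ls → ∀ σ : ℕ → Trm F,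
    Typing R Θ sΘ [] (Θ f) (sΘ f) → Θ f ∈ interp R I (sΘ f) Trm.var →
    Models R I (compSubst (mkSubst ls.reverse) σ) (Trm.teleN ls.length (Θ f)) →
    Models R I σ (Δ l r)

/-- A term in `𝕂 ∪ {KIND}`. -/
def IsKindLike {F : Type} (t : Trm F) : Prop := Trm.IsKind t ∨ t = .kind

/-- `R` is plain function-passing (PFP): for every rule `f l⃗ → r` with `Θ_f = Πx⃗:T⃗.U` and
`|x⃗| = |l⃗|`, no `l_i` is a kind or `KIND`, and every `(y : T) ∈ Δ_{f l⃗→r}` satisfies: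
either there is `i` with `y = l_i` and `T = T_i[x⃗↦l⃗]`, or `y ∈ FV(l_i)` and `T = D t⃗`
with `D` undefined and `|t⃗| = arit(Θ_D)`. -/
def PFP {F : Type} (R : Rules F) (Θ : F → Trm F) (Δ : Trm F → Trm F → List (Trm F)) : Prop :=
  ∀ l r, (l, r) ∈ R → ∀ (f : F) ls, l = Trm.appList (.sym f) ls →
    (∀ li ∈ ls, ¬ IsKindLike li) ∧
    (∀ i A, (Δ l r)[i]? = some A →
      (∃ (k : ℕ) (Tk : Trm F), ls[k]? = some (Trm.var i) ∧ (Trm.piDoms (Θ f))[k]? = some Tk ∧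
        Trm.rename (fun j => j + i + 1) A = Trm.subst (mkSubst ((ls.take k).reverse)) Tk) ∨
      ((∃ (k : ℕ) (lk : Trm F), ls[k]? = some lk ∧ i ∈ Trm.FV lk) ∧
        ∃ (D : F) (ts : List (Trm F)), Trm.rename (fun j => j + i + 1) A =
          Trm.appList (.sym D) ts ∧ ¬ Defined R D ∧ ts.length = Trm.piArity (Θ D)))

/-! # Size-change termination -/

/-- Entries of size-change matrices: `−1`, `0` or `∞`. -/
inductive SCTe : Type
  | minusOne : SCTe
  | zero : SCTe
  | infty : SCTe
deriving DecidableEq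

/-- Min-plus multiplication of entries (addition, truncated at `−1`). -/
def SCTe.comp : SCTe → SCTe → SCTe
  | .infty, _ => .infty
  | _, .infty => .infty
  | .minusOne, _ => .minusOne
  | _, .minusOne => .minusOne
  | .zero, .zero => .zero

/-- Minimum of entries (`−1 < 0 < ∞`). -/
def SCTe.min : SCTe → SCTe → SCTe
  | .minusOne, _ => .minusOne
  | _, .minusOne => .minusOne
  | .zero, _ => .zero
  | .infty, x => x

/-- Base of the relation `⊵`: `f t₁…t_n ⊵ t_i` for `f ∈ F`. -/
def ArgSubBase {F : Type} (t u : Trm F) : Prop :=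
  ∃ (f : F) (ts : List (Trm F)), t = Trm.appList (.sym f) ts ∧ u ∈ ts

/-- `⊵`: the smallest transitive relation such that `f t₁…t_n ⊵ t_i` for `f ∈ F`. -/
def ArgGT {F : Type} : Trm F → Trm F → Prop := Relation.TransGen ArgSubBase

open Classical in
/-- The size-change matrix of a dependency pair `f l₁…l_p > g m₁…m_q`:
`a_{ij} = −1` if `l_i ⊵ m_j`, `a_{ij} = 0` if `l_i = m_j`, `a_{ij} = ∞` otherwise
(in particular if `i > p` or `j > q`). -/
noncomputable def dpMatrix {F : Type} (ls ms : List (Trm F)) : ℕ → ℕ → SCTe := fun i j =>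
  match ls[i]?, ms[j]? with
  | some li, some mj =>
      if ArgGT li mj then .minusOne else if li = mj then .zero else .infty
  | _, _ => .infty

/-- Min-plus product of matrices, the middle dimension being `d`. -/
def matComp (d : ℕ) (M N : ℕ → ℕ → SCTe) : ℕ → ℕ → SCTe := fun i j =>
  ((List.range d).map fun k => (M i k).comp (N k j)).foldr SCTe.min .infty

/-- The transitive closure of the call graph of `R`: edges are labeled by the matrices of
the dependency pairs, multiplied in the min-plus semiring along paths. -/
inductive TCEdge {F : Type} (R : Rules F) (Θ : F → Trm F) : F → F → (ℕ → ℕ → SCTe) → Prop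
  | base {f g : F} {ls ms : List (Trm F)} : DepPair R f ls g ms →
      TCEdge R Θ f g (dpMatrix ls ms)
  | comp {f g h : F} {M N : ℕ → ℕ → SCTe} : TCEdge R Θ f g M → TCEdge R Θ g h N →
      TCEdge R Θ f h (matComp (Trm.piArity (Θ g)) M N)

/-- `R` is size-change terminating: in the transitive closure of the call graph, every
idempotent matrix labeling a loop has some `−1` on its diagonal. -/
def SCT {F : Type} (R : Rules F) (Θ : F → Trm F) : Prop :=
  ∀ (f : F) (M : ℕ → ℕ → SCTe), TCEdge R Θ f f M → matComp (Trm.piArity (Θ f)) M M = M →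
    ∃ i < Trm.piArity (Θ f), M i i = SCTe.minusOne

/-! # Substitution calculus -/

namespace Trm

variable {F : Type}

theorem up_comp_upRen (ρ : ℕ → ℕ) (σ : ℕ → Trm F) :
    (fun n => up σ (upRen ρ n)) = up (fun n => σ (ρ n)) := by
  funext n; cases n <;> rfl

theorem subst_rename (t : Trm F) : ∀ (ρ : ℕ → ℕ) (σ : ℕ → Trm F),
    subst σ (rename ρ t) = subst (fun n => σ (ρ n)) t := by
  induction t with
  | pi A B ihA ihB => intro ρ σ; simp [rename, subst, ihA, ihB, up_comp_upRen]
  | lam A B ihA ihB => intro ρ σ; simp [rename, subst, ihA, ihB, up_comp_upRen]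
  | app t u iht ihu => intro ρ σ; simp [rename, subst, iht, ihu]
  | _ => intros; rfl

theorem rename_rename (t : Trm F) : ∀ (ρ ρ' : ℕ → ℕ),
    rename ρ' (rename ρ t) = rename (fun n => ρ' (ρ n)) t := by
  have hup (ρ ρ' : ℕ → ℕ) :
      (fun n => upRen ρ' (upRen ρ n)) = upRen (fun n => ρ' (ρ n)) := by
    funext n; cases n <;> rfl
  induction t with
  | pi A B ihA ihB => intro ρ σ; simp [rename, ihA, ihB, hup]
  | lam A B ihA ihB => intro ρ σ; simp [rename, ihA, ihB, hup]
  | app t u iht ihu => intro ρ σ; simp [rename, iht, ihu]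
  | _ => intros; rfl

theorem rename_subst (t : Trm F) : ∀ (σ : ℕ → Trm F) (ρ : ℕ → ℕ),
    rename ρ (subst σ t) = subst (fun n => rename ρ (σ n)) t := by
  have hup (σ : ℕ → Trm F) (ρ : ℕ → ℕ) :
      (fun n => rename (upRen ρ) (up σ n)) = up (fun n => rename ρ (σ n)) := by
    funext n; cases n
    · rfl
    · simp [up, rename_rename, upRen]
  induction t with
  | pi A B ihA ihB => intro ρ σ; simp [rename, subst, ihA, ihB, hup]
  | lam A B ihA ihB => intro ρ σ; simp [rename, subst, ihA, ihB, hup]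
  | app t u iht ihu => intro ρ σ; simp [rename, subst, iht, ihu]
  | _ => intros; rfl

theorem subst_subst (t : Trm F) : ∀ (γ σ : ℕ → Trm F),
    subst σ (subst γ t) = subst (compSubst γ σ) t := by
  have hup (γ σ : ℕ → Trm F) : compSubst (up γ) (up σ) = up (compSubst γ σ) := by
    funext n; cases n
    · rfl
    · simp [compSubst, up, subst_rename, rename_subst]
  induction t with
  | pi A B ihA ihB => intro ρ σ; simp [subst, ihA, ihB, hup]
  | lam A B ihA ihB => intro ρ σ; simp [subst, ihA, ihB, hup]
  | app t u iht ihu => intro ρ σ; simp [subst, iht, ihu]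
  | _ => intros; rfl

theorem subst_var (t : Trm F) : subst .var t = t := by
  have hup : up (.var : ℕ → Trm F) = .var := by
    funext n; cases n <;> rfl
  induction t <;> simp_all [subst]

theorem compSubst_up_scons (a : Trm F) (γ σ : ℕ → Trm F) :
    compSubst (up γ) (scons a σ) = scons a (compSubst γ σ) := by
  funext n; cases n
  · rfl
  · simp [compSubst, up, scons, subst_rename]

theorem subst1_subst_up (a : Trm F) (τ : ℕ → Trm F) (t : Trm F) :
    subst1 a (subst (up τ) t) = subst (scons a τ) t := by
  have hvar : compSubst τ .var = τ := by
    funext n; exact subst_var _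
  rw [subst1, subst_subst, compSubst_up_scons, hvar]

theorem isKind_rename (t : Trm F) : ∀ ρ : ℕ → ℕ, IsKind (rename ρ t) ↔ IsKind t := by
  induction t with
  | pi A B _ ihB => intro ρ; exact ihB _
  | _ => intros; rfl

theorem rename_eq_kind {ρ : ℕ → ℕ} {t : Trm F} : rename ρ t = .kind ↔ t = .kind := by
  cases t <;> simp [rename]

theorem isKindLike_rename (ρ : ℕ → ℕ) (t : Trm F) :
    IsKindLike (rename ρ t) ↔ IsKindLike t := by
  simp [IsKindLike, isKind_rename, rename_eq_kind]

theorem mem_FV_rename (t : Trm F) : ∀ (ρ : ℕ → ℕ) (i : ℕ),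
    i ∈ FV (rename ρ t) → ∃ j ∈ FV t, ρ j = i := by
  have under (ρ : ℕ → ℕ) (B : Trm F) (i : ℕ) (h : ∃ j ∈ FV B, upRen ρ j = i + 1) :
      ∃ j, j + 1 ∈ FV B ∧ ρ j = i := by
    obtain ⟨j, hj, e⟩ := h
    cases j with
    | zero => simp [upRen] at e
    | succ j => exact ⟨j, hj, by simpa [upRen] using e⟩
  induction t with
  | pi A B ihA ihB =>
    rintro ρ i (h | h)
    · obtain ⟨j, hj, e⟩ := ihA ρ i h
      exact ⟨j, .inl hj, e⟩
    · obtain ⟨j, hj, e⟩ := under ρ B i (ihB _ _ h)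
      exact ⟨j, .inr hj, e⟩
  | lam A B ihA ihB =>
    rintro ρ i (h | h)
    · obtain ⟨j, hj, e⟩ := ihA ρ i h
      exact ⟨j, .inl hj, e⟩
    · obtain ⟨j, hj, e⟩ := under ρ B i (ihB _ _ h)
      exact ⟨j, .inr hj, e⟩
  | app t u iht ihu =>
    rintro ρ i (h | h)
    · obtain ⟨j, hj, e⟩ := iht ρ i h
      exact ⟨j, .inl hj, e⟩
    · obtain ⟨j, hj, e⟩ := ihu ρ i h
      exact ⟨j, .inr hj, e⟩
  | var n => rintro ρ i rfl; exact ⟨n, rfl, rfl⟩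
  | _ => intro ρ i h; exact h.elim

/-- Substitutions without kinds on the free variables lift under binders. -/
theorem not_isKindLike_up {γ : ℕ → Trm F} {B : Trm F}
    (h : ∀ i, i + 1 ∈ FV B → ¬ IsKindLike (γ i)) :
    ∀ i ∈ FV B, ¬ IsKindLike (up γ i) := by
  intro i hi
  cases i with
  | zero => simp [up, IsKindLike, IsKind]
  | succ i => simpa [up, isKindLike_rename] using h i hi

theorem isKind_subst (t : Trm F) : ∀ γ : ℕ → Trm F, (∀ i ∈ FV t, ¬ IsKindLike (γ i)) →
    (IsKind (subst γ t) ↔ IsKind t) := by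
  induction t with
  | pi A B _ ihB => exact fun γ h => ihB _ (not_isKindLike_up fun i hi => h i (.inr hi))
  | var n =>
    intro γ h
    have hn : ¬ IsKindLike (γ n) := h n rfl
    simp only [subst, IsKind, iff_false]
    exact fun hk => hn (.inl hk)
  | _ => intros; rfl

theorem subst_eq_kind {γ : ℕ → Trm F} {t : Trm F} (h : subst γ t = .kind) :
    t = .kind ∨ ∃ i, t = .var i ∧ γ i = .kind := by
  cases t <;> simp_all [subst]

theorem isKindLike_subst {γ : ℕ → Trm F} {t : Trm F} (h : ∀ i ∈ FV t, ¬ IsKindLike (γ i))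
    (ht : IsKindLike (subst γ t)) : IsKindLike t := by
  rcases ht with ht | ht
  · exact .inl ((isKind_subst t γ h).1 ht)
  · rcases subst_eq_kind ht with e | ⟨i, rfl, e⟩
    · exact .inr e
    · exact (h i rfl (.inr e)).elim

/-- In the leading products of a kind, no domain is a kind or `KIND`. -/
def KindDomsOk : Trm F → Prop
  | .pi A B => IsKind B → ¬ IsKindLike A ∧ KindDomsOk B
  | _ => True

theorem KindDomsOk.rename {t : Trm F} : ∀ {ρ : ℕ → ℕ}, KindDomsOk t →
    KindDomsOk (Trm.rename ρ t) := by
  induction t with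
  | pi A B _ ihB =>
    intro ρ h hB
    obtain ⟨hA, hB⟩ := h ((isKind_rename B _).1 hB)
    exact ⟨fun hk => hA ((isKindLike_rename _ _).1 hk), ihB hB⟩
  | _ => intros; trivial

theorem subst_appList_ne_kind (σ : ℕ → Trm F) (ls : List (Trm F)) :
    ∀ h : Trm F, subst σ h ≠ .kind → subst σ (appList h ls) ≠ .kind := by
  induction ls with
  | nil => exact fun h hh => hh
  | cons a as ih => exact fun h _ => ih _ (by simp [subst])

end Trm

/-! # Kinds and typing -/

theorem normalForm_kind {F : Type} {R : Rules F} (hRS : IsRewriteSystem R) :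
    NormalForm R (.kind : Trm F) := by
  intro u h
  generalize ht : (Trm.kind : Trm F) = t at h
  cases h with
  | rule σ hmem =>
    obtain ⟨_, f, ls, e⟩ := hRS _ hmem
    simp only at e
    subst e
    exact Trm.subst_appList_ne_kind σ ls (.sym f) (by simp [Trm.subst]) ht.symm
  | _ => cases ht

theorem Typing.ne_kind {F : Type} {R : Rules F} {Θ sΘ : F → Trm F} {Γ : List (Trm F)}
    {t T : Trm F} (h : Typing R Θ sΘ Γ t T) : t ≠ .kind := by
  induction h with
  | weak _ _ _ _ ih => exact fun e => ih (Trm.rename_eq_kind.1 e)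
  | conv _ _ _ _ ih _ => exact ih
  | _ => simp

theorem PresTyping.redStar {F : Type} {R : Rules F} {Θ sΘ : F → Trm F}
    (hpres : PresTyping R Θ sΘ) {Γ : List (Trm F)} {t u T : Trm F}
    (ht : Typing R Θ sΘ Γ t T) (h : RedStar R t u) : Typing R Θ sΘ Γ u T := by
  induction h with
  | refl => exact ht
  | tail _ hr ih => exact hpres _ _ _ _ ih hr

/-- The only type of a kind is `KIND`. -/
theorem Typing.eq_kind_of_isKind {F : Type} {R : Rules F} {Θ sΘ : F → Trm F}
    (hRS : IsRewriteSystem R) (hpres : PresTyping R Θ sΘ) {Γ : List (Trm F)} {t T : Trm F}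
    (h : Typing R Θ sΘ Γ t T) : Trm.IsKind t → T = .kind := by
  induction h with
  | ax => exact fun _ => rfl
  | weak _ _ _ _ ih =>
    exact fun hk => Trm.rename_eq_kind.2 (ih ((Trm.isKind_rename _ _).1 hk))
  | prod _ _ _ _ ih => exact ih
  | conv _ hj hB _ ih _ =>
    intro hk
    obtain rfl := ih hk
    obtain ⟨v, hv, hBv⟩ := hj
    have hv : v = .kind := by
      rcases Relation.ReflTransGen.cases_head hv with e | ⟨w, hw, _⟩
      · exact e.symm
      · exact (normalForm_kind hRS w hw).elim
    subst hv
    exact ((hpres.redStar hB hBv).ne_kind rfl).elim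
  | _ => exact fun hk => hk.elim

theorem Typing.kindDomsOk {F : Type} {R : Rules F} {Θ sΘ : F → Trm F}
    (hRS : IsRewriteSystem R) (hpres : PresTyping R Θ sΘ) {Γ : List (Trm F)} {t T : Trm F}
    (h : Typing R Θ sΘ Γ t T) : t.KindDomsOk := by
  induction h with
  | weak _ _ _ _ ih => exact ih.rename
  | prod _ hA _ _ ih =>
    refine fun _ => ⟨?_, ih⟩
    rintro (hk | hk)
    · cases hA.eq_kind_of_isKind hRS hpres hk
    · exact hA.ne_kind hk
  | conv _ _ _ _ ih _ => exact ih
  | _ => trivial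

theorem Typing.lt_length_of_mem_FV {F : Type} {R : Rules F} {Θ sΘ : F → Trm F}
    {Γ : List (Trm F)} {t T : Trm F} (h : Typing R Θ sΘ Γ t T) :
    ∀ i ∈ t.FV, i < Γ.length := by
  induction h with
  | ax => exact fun i hi => hi.elim
  | var => rintro i rfl; simp
  | weak _ _ _ _ ih =>
    intro i hi
    obtain ⟨j, hj, rfl⟩ := Trm.mem_FV_rename _ _ _ hi
    simpa using ih j hj
  | prod _ _ _ ihA ihB =>
    rintro i (hi | hi)
    · exact ihA i hi
    · simpa using ihB _ hi
  | abs _ _ _ ihb ihAB =>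
    rintro i (hi | hi)
    · exact ihAB i (.inl hi)
    · simpa using ihb _ hi
  | app _ _ iht iha =>
    rintro i (hi | hi)
    · exact iht i hi
    · exact iha i hi
  | conv _ _ _ _ ih _ => exact ih
  | symb => exact fun i hi => hi.elim

/-- The types declared in the environment of a typing judgment are typable by a sort. -/
theorem Typing.exists_typing_getElem {F : Type} {R : Rules F} {Θ sΘ : F → Trm F}
    {Γ : List (Trm F)} {t T : Trm F} (h : Typing R Θ sΘ Γ t T) :
    ∀ i A, Γ[i]? = some A → ∃ s, Typing R Θ sΘ (Γ.drop (i + 1)) A s := by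
  have cons {Γ : List (Trm F)} {B s : Trm F} (hB : Typing R Θ sΘ Γ B s)
      (ih : ∀ i A, Γ[i]? = some A → ∃ s, Typing R Θ sΘ (Γ.drop (i + 1)) A s) (i : ℕ)
      (A : Trm F) (hA : (B :: Γ)[i]? = some A) :
      ∃ s, Typing R Θ sΘ ((B :: Γ).drop (i + 1)) A s := by
    cases i with
    | zero =>
      obtain rfl : B = A := by simpa using hA
      exact ⟨s, by simpa using hB⟩
    | succ i => simpa using ih i A (by simpa using hA)
  induction h with
  | ax => intro i A h; simp at h
  | var _ hA ih => exact cons hA ih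
  | weak _ hA _ ih _ => exact cons hA ih
  | prod _ _ _ ih _ => exact ih
  | abs _ _ _ _ ih => exact ih
  | app _ _ ih _ => exact ih
  | conv _ _ _ _ ih _ => exact ih
  | symb => intro i A h; simp at h

/-- A well-typed substitution maps no declared variable to a kind or to `KIND`. -/
theorem SubstTyped.not_isKindLike {F : Type} {R : Rules F} {Θ sΘ : F → Trm F}
    (hRS : IsRewriteSystem R) (hpres : PresTyping R Θ sΘ) {Γ Δ : List (Trm F)}
    {γ : ℕ → Trm F} (hγ : SubstTyped (Typing R Θ sΘ) Γ γ Δ) {t T : Trm F}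
    (ht : Typing R Θ sΘ Δ t T) {i : ℕ} (hi : i < Δ.length) : ¬ IsKindLike (γ i) := by
  have hget : Δ[i]? = some Δ[i] := List.getElem?_eq_getElem hi
  have hγi := hγ i _ hget
  rintro (hk | hk)
  · obtain ⟨s, hA⟩ := ht.exists_typing_getElem i _ hget
    rcases Trm.subst_eq_kind (hγi.eq_kind_of_isKind hRS hpres hk) with e | ⟨j, e, hj⟩
    · exact hA.ne_kind e
    · have hlt := hA.lt_length_of_mem_FV j (by rw [e]; rfl)
      rw [List.length_drop] at hlt
      have hlt : j + i + 1 < Δ.length := by omega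
      exact (hγ _ _ (List.getElem?_eq_getElem hlt)).ne_kind hj
  · exact hγi.ne_kind hk

/-! # Interpretation and substitution -/

open Classical in
theorem interp_of_not_isKindLike {F : Type} (R : Rules F) (I : Interp F) {T : Trm F}
    (hT : ¬ IsKindLike T) (σ : ℕ → Trm F) :
    interp R I T σ =
      if Trm.subst σ T ∈ domD R I then partMem I (Trm.subst σ T) else SNset R := by
  cases T with
  | type => exact (hT (.inl trivial)).elim
  | kind => exact (hT (.inr rfl)).elim
  | pi A B =>
    have hB : ¬ Trm.IsKind B := fun hB => hT (.inl hB)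
    simp [interp, hB]
  | _ => simp [interp]

theorem dom_iff_mem_domD {F : Type} {R : Rules F} {I : Interp F} (hI : interpF R I = I)
    (T : Trm F) : (I T).Dom ↔ T ∈ domD R I := by
  conv_lhs => rw [← hI]
  rfl

theorem interp_subst_of_not_isKindLike {F : Type} {R : Rules F} {I : Interp F}
    (hI : interpF R I = I) (U : Trm F) : ∀ γ σ : ℕ → Trm F, U.KindDomsOk →
    (∀ i ∈ U.FV, ¬ IsKindLike (γ i)) → Trm.subst σ (Trm.subst γ U) ∈ domD R I →
    interp R I (Trm.subst γ U) σ = interp R I U (compSubst γ σ) := by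
  have nonkind (U : Trm F) (γ σ : ℕ → Trm F) (hU : ¬ IsKindLike U)
      (hγ : ∀ i ∈ U.FV, ¬ IsKindLike (γ i)) :
      interp R I (Trm.subst γ U) σ = interp R I U (compSubst γ σ) := by
    rw [interp_of_not_isKindLike R I hU,
      interp_of_not_isKindLike R I (fun h => hU (Trm.isKindLike_subst hγ h)), Trm.subst_subst]
  induction U with
  | type => intros; rfl
  | kind => intros; rfl
  | pi A B _ ihB =>
    intro γ σ hok hγ hdom
    by_cases hB : Trm.IsKind B
    · obtain ⟨hA, hokB⟩ := hok hB
      have hγA : ∀ i ∈ A.FV, ¬ IsKindLike (γ i) := fun i hi => hγ i (.inl hi)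
      have hγB : ∀ i ∈ B.FV, ¬ IsKindLike (Trm.up γ i) :=
        Trm.not_isKindLike_up fun i hi => hγ i (.inr hi)
      have hB' : Trm.IsKind (Trm.subst (Trm.up γ) B) := (Trm.isKind_subst B _ hγB).2 hB
      obtain ⟨hdA, hdB⟩ := hdom.2 _ _ Relation.ReflTransGen.refl
      have hAD := (dom_iff_mem_domD hI _).1 hdA
      have hmem (a : Trm F) (ha : a ∈ interp R I A (compSubst γ σ)) :
          interp R I (Trm.subst (Trm.up γ) B) (Trm.scons a σ) =
            interp R I B (Trm.scons a (compSubst γ σ)) := by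
        rw [interp_of_not_isKindLike R I hA, ← Trm.subst_subst, if_pos hAD] at ha
        rw [← Trm.compSubst_up_scons]
        refine ihB _ _ hokB hγB ?_
        have hd := hdB _ (Part.get_mem hdA) a (ha _ (Part.get_mem hdA))
        rwa [Trm.subst1_subst_up, dom_iff_mem_domD hI] at hd
      simp only [Trm.subst, interp, hB, hB', if_true, nonkind A γ σ hA hγA]
      ext t
      exact forall₂_congr fun a ha => by rw [hmem a ha]
    · refine nonkind _ γ σ ?_ hγ
      rintro (hk | hk)
      · exact hB hk
      · cases hk
  | _ =>
    intro γ σ _ hγ _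
    exact nonkind _ γ σ (by simp [IsKindLike, Trm.IsKind]) hγ

/-- Lemma 4(e) of the paper. If `Δ ⊢ U : s`, `Γ ⊢ γ : Δ` and
`Uγσ ∈ 𝒟`, then `⟦Uγ⟧σ = ⟦U⟧(γσ)`. -/
theorem interp_subst {F : Type} (R : Rules F) (Θ sΘ : F → Trm F)
    (hRS : IsRewriteSystem R)
    (hconf : LocallyConfluent R)
    (hpres : PresTyping R Θ sΘ)
    (calI : Interp F) (hlfp : IsLfpInterp (interpF R) calI)
    (Δ Γ : List (Trm F)) (U s : Trm F) (γ σ : ℕ → Trm F)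
    (hs : Trm.IsSort s)
    (hU : Typing R Θ sΘ Δ U s)
    (hγ : SubstTyped (Typing R Θ sΘ) Γ γ Δ)
    (hdom : Trm.subst σ (Trm.subst γ U) ∈ domD R calI) :
    interp R calI (Trm.subst γ U) σ = interp R calI U (compSubst γ σ) := by
  exact interp_subst_of_not_isKindLike hlfp.1 U γ σ (hU.kindDomsOk hRS hpres)
    (fun i hi => hγ.not_isKindLike hRS hpres hU (hU.lt_length_of_mem_FV i hi)) hdom
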